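/- Ramanujan identity for E2: for all τ ∈ ℍ, (1/(2πi)) · E2'(τ) = (E2(τ)² − E4(τ))/12, where E2' denotes the complex derivative of E2. -/

import Mathlib

/-!
The function `F = D E₂ - E₂² / 12`, with `D = (1/(2πi)) d/dτ`, is a modular form of weight `4`:
if `a = E₂ - E₂ ∣[2] γ` denotes the anomaly of `E₂`, then `D a = a² / 12`, and this is exactly what
makes the terms involving `a` cancel. A level one form of weight less than `12` is determined by its
limit at `i∞`. There `E₂` tends to `1` and hence, by Cauchy's estimate, `D E₂` tends to `0`, so `F`
has the same limit `-1/12` as `-E₄ / 12`, and the two agree.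
-/

/-- `q = exp(2πiτ)`. -/
noncomputable def qexp (τ : ℂ) : ℂ := Complex.exp (2 * Real.pi * Complex.I * τ)

/-- Divisor power sum `σ_k(n) = ∑_{d | n} d^k`, as a complex number. -/
noncomputable def sigmaC (k n : ℕ) : ℂ := ∑ d ∈ Nat.divisors n, (d : ℂ) ^ k

/-- Eisenstein series `E₂`. -/
noncomputable def E2 (τ : ℂ) : ℂ := 1 - 24 * ∑' n : ℕ, sigmaC 1 (n + 1) * qexp τ ^ (n + 1)

/-- Eisenstein series `E₄`. -/
noncomputable def E4 (τ : ℂ) : ℂ := 1 + 240 * ∑' n : ℕ, sigmaC 3 (n + 1) * qexp τ ^ (n + 1)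

/-- Eisenstein series `E₆`. -/
noncomputable def E6 (τ : ℂ) : ℂ := 1 - 504 * ∑' n : ℕ, sigmaC 5 (n + 1) * qexp τ ^ (n + 1)

/-- The discriminant form `Δ = (E₄³ - E₆²)/1728`. -/
noncomputable def Δfun (τ : ℂ) : ℂ := (E4 τ ^ 3 - E6 τ ^ 2) / 1728

/-- The ratio of quasi-periods `p(τ) = τ - 6i/(π E₂(τ))`. -/
noncomputable def pfun (τ : ℂ) : ℂ := τ - 6 * Complex.I / (Real.pi * E2 τ)

open Filter Topology UpperHalfPlane Derivative
open scoped MatrixGroups ModularForm Manifold Real ArithmeticFunction.sigma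

section LimitsAtImInfty

theorem tendsto_atImInfty_of_hasSum_qExpansion {f : ℍ → ℂ} {c : ℕ → ℂ} {h : ℝ} (hh : 0 < h)
    (hf : ∀ τ : ℍ, HasSum (fun m ↦ c m • Function.Periodic.qParam h τ ^ m) (f τ)) :
    Tendsto f atImInfty (𝓝 (c 0)) := by
  let q (τ : ℍ) : ℂ := Function.Periodic.qParam h τ
  let g (τ : ℍ) : ℂ := (f τ - c 0) / q τ
  have hq (τ : ℍ) : q τ ≠ 0 := Function.Periodic.qParam_ne_zero _
  have hg_sum (τ : ℍ) : HasSum (fun m ↦ c (m + 1) • q τ ^ m) (g τ) := by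
    have hsum := ((hasSum_nat_add_iff' 1).mpr (hf τ)).div_const (q τ)
    rw [Finset.sum_range_one, pow_zero, smul_eq_mul, mul_one] at hsum
    refine hsum.congr_fun fun m ↦ ?_
    rw [smul_eq_mul, smul_eq_mul, pow_succ, ← mul_assoc, mul_div_cancel_right₀ _ (hq τ)]
  have hg : IsBoundedAtImInfty g := isBoundedAtImInfty_of_hasSum_qExpansion hh hg_sum
  have hqg : Tendsto (fun τ ↦ q τ * g τ) atImInfty (𝓝 0) :=
    (qParam_tendsto_atImInfty hh).zero_mul_isBoundedUnder_le
      ((Asymptotics.isBigO_one_iff ℝ).mp hg)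
  have hfg (τ : ℍ) : q τ * g τ + c 0 = f τ := by
    rw [mul_div_cancel₀ _ (hq τ), sub_add_cancel]
  simpa only [hfg, zero_add] using hqg.add_const (c 0)

theorem norm_deriv_le_of_forall_le_im {E : Type*} [NormedAddCommGroup E] [NormedSpace ℂ E]
    {f : ℂ → E} {B M : ℝ} {z : ℂ} (hf : DiffContOnCl ℂ f {w | B < w.im})
    (hM : ∀ w : ℂ, B ≤ w.im → ‖f w‖ ≤ M) (hz : B < z.im) :
    ‖deriv f z‖ ≤ M / (z.im - B) := by
  have him (w : ℂ) : z.im - dist w z ≤ w.im := by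
    have := (abs_le.mp (Complex.abs_im_le_norm (w - z))).1
    rw [Complex.sub_im, ← dist_eq_norm] at this
    linarith
  refine Complex.norm_deriv_le_of_forall_mem_sphere_norm_le (sub_pos.mpr hz)
    (hf.mono fun w hw ↦ ?_) fun w hw ↦ hM w ?_
  · have := Metric.mem_ball.mp hw
    exact (by linarith : B < z.im - dist w z).trans_le (him w)
  · simpa only [Metric.mem_sphere.mp hw, sub_sub_cancel] using him w

theorem isZeroAtImInfty_normalizedDerivOfComplex {f : ℍ → ℂ} (hf : MDiff f)
    (hb : IsBoundedAtImInfty f) : IsZeroAtImInfty (D f) := by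
  obtain ⟨M, A, hMA⟩ := isBoundedAtImInfty_iff.mp hb
  let B : ℝ := max A 1
  have hpos {w : ℂ} (hw : B ≤ w.im) : 0 < w.im := by
    linarith [le_max_right A 1]
  have hcl : DiffContOnCl ℂ (f ∘ ofComplex) {w | B < w.im} := by
    refine ((UpperHalfPlane.mdifferentiable_iff.mp hf).mono fun w hw ↦ ?_).diffContOnCl
    rw [Complex.closure_setOfPred_lt_im] at hw
    exact hpos hw
  have hM (w : ℂ) (hw : B ≤ w.im) : ‖(f ∘ ofComplex) w‖ ≤ M := by
    rw [Function.comp_apply, ofComplex_apply_of_im_pos (hpos hw)]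
    exact hMA _ ((le_max_left A 1).trans hw)
  have hbound : ∀ᶠ z : ℍ in atImInfty, ‖deriv (f ∘ ofComplex) z‖ ≤ M / (z.im - B) :=
    (tendsto_comap.eventually (eventually_gt_atTop B)).mono fun z hz ↦
      norm_deriv_le_of_forall_le_im hcl hM hz
  have hlim : Tendsto (fun z : ℍ ↦ M / (z.im - B)) atImInfty (𝓝 0) :=
    tendsto_const_nhds.div_atTop (tendsto_atTop_add_const_right _ _ tendsto_comap)
  simpa only [mul_zero] using! (squeeze_zero_norm' hbound hlim).const_mul (2 * π * Complex.I)⁻¹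

theorem tendsto_E2_atImInfty : Tendsto EisensteinSeries.E2 atImInfty (𝓝 1) := by
  simpa only [if_true] using! tendsto_atImInfty_of_hasSum_qExpansion one_pos fun τ ↦ by
    simpa only [Function.Periodic.qParam, Complex.ofReal_one, div_one]
      using EisensteinSeries.hasSum_qExpansion_E2 (z := τ)

theorem tendsto_eisensteinSeries_atImInfty {k : ℕ} (hk : 3 ≤ k) (hk2 : Even k) :
    Tendsto (ModularForm.E hk) atImInfty (𝓝 1) := by
  rw [← EisensteinSeries.E_qExpansion_coeff_zero hk hk2]
  exact tendsto_atImInfty_of_hasSum_qExpansion one_pos fun τ ↦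
    ModularForm.hasSum_qExpansion (ModularForm.E hk) one_pos one_mem_strictPeriods_SL τ

end LimitsAtImInfty

section LevelOne

variable {k : ℤ}

/-- The modular form of level one on a holomorphic function which is invariant under `SL(2, ℤ)` and
bounded at `i∞`; the other cusps need no separate condition since `SL(2, ℤ)` permutes them
transitively. -/
def levelOneModularForm (f : ℍ → ℂ) (hf : MDiff f) (hslash : ∀ γ : SL(2, ℤ), f ∣[k] γ = f)
    (hbdd : IsBoundedAtImInfty f) : ModularForm 𝒮ℒ k where
  toFun := f
  slash_action_eq' := fun _ ⟨γ, hγ⟩ ↦ hγ ▸ hslash γ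
  holo' := hf
  bdd_at_cusps' hc := by
    rw [Subgroup.IsArithmetic.isCusp_iff_isCusp_SL2Z] at hc
    refine (OnePoint.isBoundedAt_iff_forall_SL2Z hc).mpr fun γ _ ↦ ?_
    rwa [hslash γ]

theorem modularForm_eq_zero_of_isZeroAtImInfty (hk : k < 12) {f : ModularForm 𝒮ℒ k}
    (hf : IsZeroAtImInfty f) : f = 0 := by
  have hcoeff : (qExpansion 1 f).coeff 0 = 0 := by
    rw [qExpansion_coeff_zero one_pos
      (ModularFormClass.analyticAt_cuspFunction_zero f one_pos one_mem_strictPeriods_SL)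
      (SlashInvariantFormClass.periodic_comp_ofComplex f one_mem_strictPeriods_SL)]
    exact hf.valueAtInfty_eq_zero
  have hcusp : ModularForm.toCuspForm f hcoeff = 0 :=
    rank_zero_iff_forall_zero.mp (CuspForm.rank_eq_zero_of_weight_lt_twelve hk) _
  ext z
  exact DFunLike.congr_fun hcusp z

theorem modularForm_eq_of_tendsto_atImInfty (hk : k < 12) {f g : ModularForm 𝒮ℒ k} {c : ℂ}
    (hf : Tendsto f atImInfty (𝓝 c)) (hg : Tendsto g atImInfty (𝓝 c)) : f = g := by
  refine sub_eq_zero.mp (modularForm_eq_zero_of_isZeroAtImInfty hk ?_)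
  simpa only [sub_self] using! hf.sub hg

end LevelOne

section SerreDerivative

theorem hasDerivAt_D2_comp_ofComplex (γ : SL(2, ℤ)) (z : ℍ) :
    HasDerivAt (EisensteinSeries.D2 γ ∘ ofComplex)
      ((2 * π * Complex.I)⁻¹ * -EisensteinSeries.D2 γ z ^ 2) z := by
  have hpow : HasDerivAt (fun w ↦ 2 * π * Complex.I * γ 1 0 * denom γ w ^ (-1 : ℤ))
      ((2 * π * Complex.I)⁻¹ * -EisensteinSeries.D2 γ z ^ 2) z := by
    refine ((hasDerivAt_denom_zpow (γ : GL (Fin 2) ℝ) (-1) z).const_mul _).congr_deriv ?_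
    have hden := denom_ne_zero (γ : GL (Fin 2) ℝ) z
    have hexp : denom γ z ^ (-1 - 1 : ℤ) = (denom γ z ^ 2)⁻¹ := zpow_neg _ 2
    rw [hexp, EisensteinSeries.D2]
    field_simp
    simp [sq]
  refine hpow.congr_of_eventuallyEq ?_
  filter_upwards [isOpen_upperHalfPlaneSet.mem_nhds z.im_pos] with w hw
  rw [Function.comp_apply, ofComplex_apply_of_im_pos hw, EisensteinSeries.D2, zpow_neg_one,
    div_eq_mul_inv]

theorem mdifferentiable_D2 (γ : SL(2, ℤ)) : MDiff (EisensteinSeries.D2 γ) := fun z ↦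
  UpperHalfPlane.mdifferentiableAt_iff.mpr (hasDerivAt_D2_comp_ofComplex γ z).differentiableAt

theorem normalizedDerivOfComplex_D2 (γ : SL(2, ℤ)) :
    D (EisensteinSeries.D2 γ) = (4 * π ^ 2 : ℂ)⁻¹ • EisensteinSeries.D2 γ ^ 2 := by
  ext z
  rw [normalizedDerivOfComplex, (hasDerivAt_D2_comp_ofComplex γ z).deriv, Pi.smul_apply,
    Pi.pow_apply, smul_eq_mul, mul_neg, mul_neg, ← mul_assoc, ← neg_mul]
  congr 1
  field_simp
  rw [Complex.I_sq]
  norm_num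

/-- The anomaly `a = E₂ - E₂ ∣[2] γ` of the quasi-modular form `E₂`, defined by its closed form
`6ic / (π(cz + d))`, where `(c, d)` is the bottom row of `γ`. -/
noncomputable def E2Anomaly (γ : SL(2, ℤ)) : ℍ → ℂ := (3 / π ^ 2 : ℂ) • EisensteinSeries.D2 γ

theorem E2_slash_eq_sub_E2Anomaly (γ : SL(2, ℤ)) :
    EisensteinSeries.E2 ∣[(2 : ℤ)] γ = EisensteinSeries.E2 - E2Anomaly γ := by
  rw [EisensteinSeries.E2_slash_action, E2Anomaly, riemannZeta_two]
  congr 2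
  field_simp
  norm_num

theorem mdifferentiable_E2Anomaly (γ : SL(2, ℤ)) : MDiff (E2Anomaly γ) :=
  (mdifferentiable_D2 γ).const_smul _

theorem normalizedDerivOfComplex_E2Anomaly (γ : SL(2, ℤ)) :
    D (E2Anomaly γ) = (12 : ℂ)⁻¹ • E2Anomaly γ ^ 2 := by
  rw [E2Anomaly, normalizedDerivOfComplex_smul _ _ (mdifferentiable_D2 γ),
    normalizedDerivOfComplex_D2, smul_pow, smul_smul, smul_smul]
  congr 1
  field_simp
  norm_num

theorem serreDerivative_two_E2_slash (γ : SL(2, ℤ)) :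
    serreDerivative 2 EisensteinSeries.E2 ∣[(4 : ℤ)] γ =
      serreDerivative 2 (EisensteinSeries.E2 - E2Anomaly γ) := by
  rw [← E2_slash_eq_sub_E2Anomaly]
  exact_mod_cast serreDerivative_slash_equivariant (k := 2) E2_mdifferentiable

theorem serreDerivative_one_E2_slash (γ : SL(2, ℤ)) :
    serreDerivative 1 EisensteinSeries.E2 ∣[(4 : ℤ)] γ = serreDerivative 1 EisensteinSeries.E2 := by
  have hsplit : serreDerivative 1 EisensteinSeries.E2 = serreDerivative 2 EisensteinSeries.E2 +
      (12 : ℂ)⁻¹ • (EisensteinSeries.E2 * EisensteinSeries.E2) := by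
    ext z
    simp only [serreDerivative_apply, Pi.add_apply, Pi.smul_apply, Pi.mul_apply, smul_eq_mul]
    ring
  have hmul : (EisensteinSeries.E2 * EisensteinSeries.E2) ∣[(4 : ℤ)] γ =
      (EisensteinSeries.E2 - E2Anomaly γ) * (EisensteinSeries.E2 - E2Anomaly γ) := by
    rw [← E2_slash_eq_sub_E2Anomaly]
    exact ModularForm.mul_slash_SL2 2 2 γ _ _
  have hD : D (EisensteinSeries.E2 - E2Anomaly γ) =
      D EisensteinSeries.E2 - (12 : ℂ)⁻¹ • E2Anomaly γ ^ 2 := by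
    rw [normalizedDerivOfComplex_sub _ _ E2_mdifferentiable (mdifferentiable_E2Anomaly γ),
      normalizedDerivOfComplex_E2Anomaly]
  rw [hsplit, SlashAction.add_slash, ModularForm.SL_smul_slash, serreDerivative_two_E2_slash, hmul]
  ext z
  simp only [serreDerivative_apply, hD, Pi.add_apply, Pi.sub_apply, Pi.smul_apply, Pi.mul_apply,
    Pi.pow_apply, smul_eq_mul]
  ring

theorem tendsto_serreDerivative_one_E2_atImInfty :
    Tendsto (serreDerivative 1 EisensteinSeries.E2) atImInfty (𝓝 (-12⁻¹)) := by
  have hD : Tendsto (D EisensteinSeries.E2) atImInfty (𝓝 0) :=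
    isZeroAtImInfty_normalizedDerivOfComplex E2_mdifferentiable
      EisensteinSeries.isBoundedAtImInfty_E2
  have hlim := hD.sub ((tendsto_E2_atImInfty.const_mul (1 * 12⁻¹)).mul tendsto_E2_atImInfty)
  have hvalue : (0 - 1 * 12⁻¹ * 1 * 1 : ℂ) = -12⁻¹ := by norm_num
  exact hvalue ▸ hlim

theorem serreDerivative_one_E2_eq_smul_E₄ :
    serreDerivative 1 EisensteinSeries.E2 = (-12⁻¹ : ℂ) • ⇑ModularForm.E₄ := by
  let F : ModularForm 𝒮ℒ 4 := levelOneModularForm (serreDerivative 1 EisensteinSeries.E2)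
    (serreDerivative_mdifferentiable 1 E2_mdifferentiable) serreDerivative_one_E2_slash
    (tendsto_serreDerivative_one_E2_atImInfty.isBigO_one ℝ)
  have hE₄ : Tendsto ((-12⁻¹ : ℂ) • ModularForm.E₄) atImInfty (𝓝 (-12⁻¹)) := by
    simpa only [mul_one] using!
      (tendsto_eisensteinSeries_atImInfty (by norm_num : 3 ≤ 4) ⟨2, rfl⟩).const_mul (-12⁻¹ : ℂ)
  have hF : F = (-12⁻¹ : ℂ) • ModularForm.E₄ :=
    modularForm_eq_of_tendsto_atImInfty (by norm_num) tendsto_serreDerivative_one_E2_atImInfty hE₄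
  exact congrArg DFunLike.coe hF

theorem normalizedDerivOfComplex_E2 (z : ℍ) :
    D EisensteinSeries.E2 z = (EisensteinSeries.E2 z ^ 2 - ModularForm.E₄ z) / 12 := by
  have h := congrFun serreDerivative_one_E2_eq_smul_E₄ z
  rw [serreDerivative_apply, Pi.smul_apply, smul_eq_mul] at h
  linear_combination h

end SerreDerivative

section QSeries

theorem tsum_sigmaC_mul_qexp_pow (k : ℕ) (τ : ℂ) :
    ∑' n : ℕ, sigmaC k (n + 1) * qexp τ ^ (n + 1) =
      ∑' n : ℕ+, (σ k n : ℂ) * Complex.exp (2 * π * Complex.I * τ) ^ (n : ℕ) := by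
  have hsigma (n : ℕ) : sigmaC k n = σ k n := by
    simp only [sigmaC, ArithmeticFunction.sigma_apply, Nat.cast_sum, Nat.cast_pow]
  simp only [hsigma, qexp]
  exact (tsum_pnat_eq_tsum_succ
    (f := fun n ↦ (σ k n : ℂ) * Complex.exp (2 * π * Complex.I * τ) ^ n)).symm

theorem E2_coe (z : ℍ) : E2 z = EisensteinSeries.E2 z := by
  rw [E2, tsum_sigmaC_mul_qexp_pow, EisensteinSeries.E2_eq_tsum_cexp]

theorem E4_coe (z : ℍ) : E4 z = ModularForm.E₄ z := by
  have hB : bernoulli 4 = -1 / 30 := by decide +kernel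
  have hE₄ := EisensteinSeries.q_expansion_bernoulli (by norm_num : 3 ≤ 4) ⟨2, rfl⟩ z
  simp only [zpow_natCast] at hE₄
  rw [E4, tsum_sigmaC_mul_qexp_pow, hE₄, hB]
  norm_num

end QSeries

theorem hasDerivAt_of_forall_coe_eq {f : ℂ → ℂ} {F : ℍ → ℂ} {z : ℍ} (hF : MDiffAt F z)
    (hfF : ∀ w : ℍ, f w = F w) : HasDerivAt f (2 * π * Complex.I * D F z) z := by
  have hderiv : HasDerivAt (F ∘ ofComplex) (2 * π * Complex.I * D F z) z := by
    rw [normalizedDerivOfComplex, mul_inv_cancel_left₀ Complex.two_pi_I_ne_zero]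
    exact (UpperHalfPlane.mdifferentiableAt_iff.mp hF).hasDerivAt
  refine hderiv.congr_of_eventuallyEq ?_
  filter_upwards [isOpen_upperHalfPlaneSet.mem_nhds z.im_pos] with w hw
  rw [Function.comp_apply, ofComplex_apply_of_im_pos hw, ← hfF]

/-- Ramanujan's identity `(1/(2πi)) E₂' = (E₂² - E₄)/12`. -/
theorem ramanujan_E2 (τ : ℂ) (hτ : 0 < τ.im) :
    HasDerivAt E2 (2 * Real.pi * Complex.I * ((E2 τ ^ 2 - E4 τ) / 12)) τ := by
  lift τ to ℍ using hτ
  rw [E2_coe, E4_coe, ← normalizedDerivOfComplex_E2]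
  exact hasDerivAt_of_forall_coe_eq (E2_mdifferentiable τ) E2_coe
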